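/- arXiv:1310.2858 — 9 statements merged into one kernel-verified Lean document; each statement's English description precedes it below -/
import Mathlib

section
/- For every k-cd c̄ for n nodes with n ≥ 1, it holds that 0 ≤ γ(c̄) ≤ 1/8. -/
open Finset

/-- The color appearing at least twice among `x, y, z`, or `x` if all three are distinct. -/
def maj3 {k : ℕ} (x y z : Fin k) : Fin k := if y = z then y else x

/-- Number of nodes with color `j` in the assignment `a`. -/
def cnt {n k : ℕ} (a : Fin n → Fin k) (j : Fin k) : ℕ :=
  (Finset.univ.filter (fun i => a i = j)).card

/-- One sample for a round of the 3-majority dynamics: each node picks three nodes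
(uniformly at random, with replacement). -/
abbrev Sample (n : ℕ) := Fin n → Fin n × Fin n × Fin n

/-- The assignment obtained from `a` after one step of the 3-majority dynamics with samples `S`. -/
def stepA {n k : ℕ} (a : Fin n → Fin k) (S : Sample n) : Fin n → Fin k :=
  fun i => maj3 (a (S i).1) (a (S i).2.1) (a (S i).2.2)

/-- Probability that the event `E` holds for the configuration obtained from `a`
after one step of the 3-majority dynamics (samples are uniform and independent). -/
noncomputable def stepPr {n k : ℕ} (a : Fin n → Fin k) (E : (Fin n → Fin k) → Prop) : ℝ :=
  (Nat.card {S : Sample n // E (stepA a S)} : ℝ) / (Nat.card (Sample n) : ℝ)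

/-- Expectation of `f` of the configuration obtained from `a` after one step of the
3-majority dynamics. -/
noncomputable def stepE {n k : ℕ} (a : Fin n → Fin k) (f : (Fin n → Fin k) → ℝ) : ℝ :=
  (∑ S : Sample n, f (stepA a S)) / (Nat.card (Sample n) : ℝ)

/-- `m(c̄)`: the size of the largest color class. -/
def mval {k : ℕ} (c : Fin k → ℕ) : ℕ := Finset.univ.sup c

/-- `M(c̄)`: the set of colors attaining the maximum. -/
def Mset {k : ℕ} (c : Fin k → ℕ) : Finset (Fin k) :=
  Finset.univ.filter (fun j => c j = mval c)

/-- `s(c̄)`: the bias, i.e. the gap between the (unique) maximum and the second largest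
color class; `0` if the maximum is not unique. -/
def sval {k : ℕ} (c : Fin k → ℕ) : ℕ :=
  if (Mset c).card = 1 then mval c - (Finset.univ \ Mset c).sup c else 0

/-- `α(c̄) = (n − m(c̄))·s(c̄)/n²`. -/
noncomputable def alphaV (n : ℕ) {k : ℕ} (c : Fin k → ℕ) : ℝ :=
  ((n : ℝ) - mval c) * sval c / (n : ℝ) ^ 2

/-- `γ(c̄) = (n·m(c̄) − Σ_h c_h²)/n² − α(c̄)`. -/
noncomputable def gammaV (n : ℕ) {k : ℕ} (c : Fin k → ℕ) : ℝ :=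
  ((n : ℝ) * mval c - ∑ h, (c h : ℝ) ^ 2) / (n : ℝ) ^ 2 - alphaV n c

/-- The trajectory of the 3-majority dynamics started at `a`, driven by the samples `S`
for the first `N` rounds. -/
def trajA {n k N : ℕ} (a : Fin n → Fin k) (S : Fin N → Sample n) : ℕ → Fin n → Fin k
  | 0 => a
  | t + 1 => if h : t < N then stepA (trajA a S t) (S ⟨t, h⟩) else trajA a S t

/-- Probability of an event `E` for an `N`-round run of the 3-majority dynamics
(all samples of all rounds are uniform and independent). -/
noncomputable def runPr {n k : ℕ} (N : ℕ) (a : Fin n → Fin k)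
    (E : (Fin N → Sample n) → Prop) : ℝ :=
  (Nat.card {S : Fin N → Sample n // E S} : ℝ) / (Nat.card (Fin N → Sample n) : ℝ)
/-- Lemma (alpha-gamma), part (c): `0 ≤ γ(c̄) ≤ 1/8`. -/
theorem gammaV_nonneg_le (n k : ℕ) (hn : 1 ≤ n) (c : Fin k → ℕ) (hc : ∑ h, c h = n) :
    0 ≤ gammaV n c ∧ gammaV n c ≤ 1 / 8 := by
  have hne : (Finset.univ : Finset (Fin k)).Nonempty := by
    rw [Finset.nonempty_iff_ne_empty]
    intro h
    rw [h] at hc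
    simp at hc
    omega
  obtain ⟨j, -, hj⟩ := Finset.exists_mem_eq_sup Finset.univ hne c
  have hj' : mval c = c j := hj
  have hle : ∀ h, c h ≤ c j := fun h => by
    rw [← hj]
    exact Finset.le_sup (Finset.mem_univ h)
  obtain ⟨b, hb⟩ : ∃ b, b = (Finset.univ.erase j).sup c := ⟨_, rfl⟩
  have hbm : b ≤ c j := by
    rw [hb]
    exact Finset.sup_le (fun h _ => hle h)
  have hcb : ∀ h ∈ Finset.univ.erase j, c h ≤ b := fun h hh => by
    rw [hb]
    exact Finset.le_sup hh
  have hjM : j ∈ Mset c := by simp [Mset, hj']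
  have hs : sval c = c j - b := by
    unfold sval
    split_ifs with h1
    · obtain ⟨x, hx⟩ := Finset.card_eq_one.mp h1
      rw [hx, Finset.mem_singleton] at hjM
      rw [hx, ← hjM, Finset.sdiff_singleton_eq_erase, ← hb, hj']
    · have h2 : 1 < (Mset c).card := by
        have := Finset.card_pos.mpr ⟨j, hjM⟩
        omega
      obtain ⟨x, hx, hxj⟩ := Finset.exists_mem_ne h2 j
      have h3 := hcb x (by simp [hxj])
      have h4 : c x = mval c := by simpa [Mset] using hx
      omega
  have hsum : c j + ∑ h ∈ Finset.univ.erase j, c h = n := by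
    rw [Finset.add_sum_erase _ _ (Finset.mem_univ j), hc]
  have hsq : (∑ h, (c h : ℝ) ^ 2) = (c j : ℝ) ^ 2 + ∑ h ∈ Finset.univ.erase j, (c h : ℝ) ^ 2 :=
    (Finset.add_sum_erase _ (fun h => (c h : ℝ) ^ 2) (Finset.mem_univ j)).symm
  have hup : ∑ h ∈ Finset.univ.erase j, (c h : ℝ) ^ 2 ≤
      b * ∑ h ∈ Finset.univ.erase j, (c h : ℝ) := by
    rw [Finset.mul_sum]
    apply Finset.sum_le_sum
    intro h hh
    have h1 : (c h : ℝ) ≤ b := by exact_mod_cast hcb h hh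
    have h2 : (0 : ℝ) ≤ c h := Nat.cast_nonneg _
    nlinarith
  have hlo : (b : ℝ) ^ 2 ≤ ∑ h ∈ Finset.univ.erase j, (c h : ℝ) ^ 2 := by
    rcases (Finset.univ.erase j).eq_empty_or_nonempty with he | he
    · rw [he] at hb
      simp at hb
      simp [he, hb]
    · obtain ⟨x, hx, hxe⟩ := Finset.exists_mem_eq_sup _ he c
      rw [hb, hxe]
      exact Finset.single_le_sum (f := fun h => (c h : ℝ) ^ 2) (fun _ _ => sq_nonneg _) hx
  have hsumR : (c j : ℝ) + ∑ h ∈ Finset.univ.erase j, (c h : ℝ) = n := by exact_mod_cast hsum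
  have hnpos : (0 : ℝ) < n := by exact_mod_cast hn
  have hbmR : (b : ℝ) ≤ c j := by exact_mod_cast hbm
  have hb0 : (0 : ℝ) ≤ b := Nat.cast_nonneg _
  unfold gammaV alphaV
  rw [hs, hj', hsq, Nat.cast_sub hbm, ← sub_div]
  constructor
  · apply div_nonneg _ (by positivity)
    nlinarith
  · rw [div_le_iff₀ (by positivity)]
    nlinarith [sq_nonneg ((n : ℝ) - 4 * b), mul_nonneg hb0 (sub_nonneg.mpr hbmR)]
end

section
/- For every k-cd c̄ for n nodes, it holds that Σ_{h∈[k]} c_h² ≤ n·m(c̄) − (n − m(c̄))·s(c̄). -/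
open Finset

/-- For every `k`-cd `c̄`, `Σ_h c_h² ≤ n·m(c̄) − (n − m(c̄))·s(c̄)`. -/
theorem sum_sq_le (n k : ℕ) (c : Fin k → ℕ) (hc : ∑ h, c h = n) :
    (∑ h, (c h : ℝ) ^ 2) ≤ (n : ℝ) * (mval c : ℝ) - ((n : ℝ) - (mval c : ℝ)) * (sval c : ℝ) := by
  have hle : ∀ h, c h ≤ mval c := fun h => Finset.le_sup (f := c) (Finset.mem_univ h)
  have hn : (n : ℝ) = ∑ h, (c h : ℝ) := by rw [← hc]; push_cast; rfl
  unfold sval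
  split_ifs with h1
  · obtain ⟨j, hj⟩ := Finset.card_eq_one.mp h1
    have hjm : c j = mval c := by
      have : j ∈ Mset c := by rw [hj]; simp
      simpa [Mset] using this
    rw [hj]
    set t := (Finset.univ \ {j}).sup c with ht
    have htm : t ≤ mval c := Finset.sup_le (fun h _ => hle h)
    have hlt : ∀ h ∈ Finset.univ \ {j}, c h ≤ t := fun h hh => Finset.le_sup (f := c) hh
    have e1 : ∑ h, (c h : ℝ) ^ 2 = ∑ h ∈ Finset.univ \ {j}, (c h : ℝ) ^ 2 + (mval c : ℝ) ^ 2 := by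
      rw [← Finset.sum_sdiff (Finset.subset_univ {j})]; simp [hjm]
    have e2 : ∑ h, (c h : ℝ) = ∑ h ∈ Finset.univ \ {j}, (c h : ℝ) + (mval c : ℝ) := by
      rw [← Finset.sum_sdiff (Finset.subset_univ {j})]; simp [hjm]
    have e3 : ∑ h ∈ Finset.univ \ {j}, (c h : ℝ) ^ 2
        ≤ (∑ h ∈ Finset.univ \ {j}, (c h : ℝ)) * t := by
      rw [Finset.sum_mul]
      refine Finset.sum_le_sum fun h hh => ?_
      rw [sq]
      have : (c h : ℝ) ≤ t := by exact_mod_cast hlt h hh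
      gcongr
    rw [hn, e1, e2, Nat.cast_sub htm]
    nlinarith [e3]
  · rw [hn, Finset.sum_mul]
    simp only [Nat.cast_zero, mul_zero, sub_zero]
    refine Finset.sum_le_sum fun h _ => ?_
    rw [sq]
    have : (c h : ℝ) ≤ mval c := by exact_mod_cast hle h
    gcongr
end

section
/- For every k-cd c̄ for n nodes (n ≥ 1) and every color j ∈ [k], the expected number of nodes colored j after one step of the 3-majority dynamics from configuration c̄ satisfies μ_j(c̄) = c_j·(1 + (n·c_j − Σ_{h∈[k]} c_h²)/n²); equivalently, the probability that a fixed node adopts color j in one step is (c_j/n)·(1 + (n·c_j − Σ_{h∈[k]} c_h²)/n²). -/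
open Finset

lemma aux_sub {ι β : Type*} [Fintype ι] [DecidableEq ι] [Fintype β] [Nonempty β]
    (p : β → Prop) (i : ι) :
    (Nat.card {S : ι → β // p (S i)} : ℝ) / (Nat.card (ι → β) : ℝ)
      = (Nat.card {x : β // p x} : ℝ) / (Nat.card β : ℝ) := by
  have h1 : Nat.card {S : ι → β // p (S i)}
      = Nat.card {x : β // p x} * Nat.card ({l // l ≠ i} → β) := by
    rw [← Nat.card_prod]
    refine Nat.card_congr (Equiv.trans ?_ Equiv.prodSubtypeFstEquivSubtypeProd)
    exact (Equiv.funSplitAt i β).subtypeEquiv (fun S => by simp)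
  have h2 : Nat.card (ι → β) = Nat.card β * Nat.card ({l // l ≠ i} → β) := by
    rw [← Nat.card_prod]
    exact Nat.card_congr (Equiv.funSplitAt i β)
  have h3 : (Nat.card ({l // l ≠ i} → β) : ℝ) ≠ 0 := by
    exact_mod_cast Nat.card_pos.ne'
  rw [h1, h2]
  push_cast
  rw [mul_div_mul_right _ _ h3]

lemma aux_cnt {n k : ℕ} (a : Fin n → Fin k) (j : Fin k) :
    (cnt a j : ℝ) = ∑ x, if a x = j then (1 : ℝ) else 0 := by
  simp [cnt]

lemma aux_sq {n k : ℕ} (a : Fin n → Fin k) :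
    ∑ y, ∑ z, (if a y = a z then (1 : ℝ) else 0) = ∑ h, (cnt a h : ℝ) ^ 2 := by
  have : ∀ h, (cnt a h : ℝ) ^ 2
      = ∑ y, ∑ z, (if a y = h then (1 : ℝ) else 0) * (if a z = h then (1 : ℝ) else 0) := by
    intro h
    rw [sq, aux_cnt, Finset.sum_mul_sum]
  simp_rw [this]
  rw [Finset.sum_comm]
  conv_rhs => rw [Finset.sum_comm]
  rw [Finset.sum_comm]
  refine Finset.sum_congr rfl fun y _ => ?_
  rw [Finset.sum_comm]
  refine Finset.sum_congr rfl fun z _ => ?_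
  simp [eq_comm]

lemma aux_triple {n k : ℕ} (a : Fin n → Fin k) (j : Fin k) :
    (Nat.card {x : Fin n × Fin n × Fin n // maj3 (a x.1) (a x.2.1) (a x.2.2) = j} : ℝ)
      = (cnt a j : ℝ) * ((n : ℝ) ^ 2 + (n * cnt a j - ∑ h, (cnt a h : ℝ) ^ 2)) := by
  rw [Nat.card_eq_fintype_card, Fintype.card_subtype, Finset.card_filter]
  push_cast
  simp_rw [Fintype.sum_prod_type]
  have h : ∀ x y z, (if maj3 (a x) (a y) (a z) = j then (1 : ℝ) else 0)
      = (if a y = j then (1 : ℝ) else 0) * (if a z = j then (1 : ℝ) else 0)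
        + (if a x = j then (1 : ℝ) else 0) * (1 - if a y = a z then (1 : ℝ) else 0) := by
    intro x y z
    unfold maj3
    split_ifs <;> simp_all
  simp_rw [h, Finset.sum_add_distrib, ← Finset.mul_sum, ← Finset.sum_mul,
    Finset.sum_sub_distrib, ← aux_cnt, aux_sq]
  simp
  ring

/-- The expected number of nodes colored `j` after one step of the 3-majority dynamics is
`μ_j(c̄) = c_j·(1 + (n·c_j − Σ_h c_h²)/n²)`; equivalently, each fixed node adopts color `j`
with probability `(c_j/n)·(1 + (n·c_j − Σ_h c_h²)/n²)`. -/
theorem mu_eq (n k : ℕ) (hn : 1 ≤ n) (c : Fin k → ℕ) (hc : ∑ h, c h = n)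
    (a : Fin n → Fin k) (ha : ∀ h, cnt a h = c h) (j : Fin k) :
    stepE a (fun b => (cnt b j : ℝ)) =
      (c j : ℝ) * (1 + ((n : ℝ) * (c j : ℝ) - ∑ h, (c h : ℝ) ^ 2) / (n : ℝ) ^ 2) ∧
    ∀ i : Fin n, stepPr a (fun b => b i = j) =
      ((c j : ℝ) / (n : ℝ)) * (1 + ((n : ℝ) * (c j : ℝ) - ∑ h, (c h : ℝ) ^ 2) / (n : ℝ) ^ 2) := by
  have hn0 : (n : ℝ) ≠ 0 := by exact_mod_cast (by omega : n ≠ 0)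
  haveI : Nonempty (Fin n) := ⟨⟨0, hn⟩⟩
  have key : ∀ i : Fin n, stepPr a (fun b => b i = j) =
      ((c j : ℝ) / (n : ℝ)) *
        (1 + ((n : ℝ) * (c j : ℝ) - ∑ h, (c h : ℝ) ^ 2) / (n : ℝ) ^ 2) := by
    intro i
    have h1 := aux_sub (fun x : Fin n × Fin n × Fin n =>
      maj3 (a x.1) (a x.2.1) (a x.2.2) = j) i
    rw [aux_triple] at h1
    simp_rw [ha] at h1
    refine Eq.trans h1 ?_
    simp only [Nat.card_eq_fintype_card, Fintype.card_prod, Fintype.card_fin]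
    push_cast
    field_simp
  refine ⟨?_, key⟩
  have h2 : stepE a (fun b => (cnt b j : ℝ)) = ∑ i, stepPr a (fun b => b i = j) := by
    unfold stepE stepPr
    rw [← Finset.sum_div]
    congr 1
    simp_rw [aux_cnt]
    rw [Finset.sum_comm]
    refine Finset.sum_congr rfl fun i _ => ?_
    rw [Nat.card_eq_fintype_card, Fintype.card_subtype, Finset.card_filter]
    push_cast
    rfl
  rw [h2]
  simp_rw [key]
  simp only [Finset.sum_const, Finset.card_univ, Fintype.card_fin, nsmul_eq_mul]
  field_simp
end

section
/- For every k-cd c̄ for n nodes (n ≥ 1) and every m ∈ M(c̄), it holds that μ_m(c̄) = c_m·(1 + γ(c̄) + α(c̄)). -/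
open Finset

theorem sum_eval_mul {n : ℕ} {T : Type*} [Fintype T] [DecidableEq T] (i : Fin n) (g : T → ℝ) :
    (∑ S : Fin n → T, g (S i)) * (Fintype.card T : ℝ) =
      (Fintype.card (Fin n → T) : ℝ) * ∑ t, g t := by
  have h1 : ∀ f : T → ℝ, ∑ S : Fin n → T, f (S i)
      = (∑ t, f t) * (Fintype.card ({j // j ≠ i} → T) : ℝ) := by
    intro f
    rw [← Equiv.sum_comp (Equiv.funSplitAt i T).symm, Fintype.sum_prod_type, Finset.sum_mul]
    refine Finset.sum_congr rfl fun t _ => ?_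
    simp [Equiv.funSplitAt, Equiv.piSplitAt, mul_comm]
  have h2 := h1 (fun _ => 1)
  have h3 := h1 g
  rw [h3]
  simp only [Finset.sum_const, Finset.card_univ, nsmul_eq_mul, mul_one] at h2
  rw [h2]; ring

theorem cnt_real {n k : ℕ} (a : Fin n → Fin k) (j : Fin k) :
    (cnt a j : ℝ) = ∑ i, if a i = j then (1 : ℝ) else 0 := by
  simp [cnt]

theorem sum_maj {n k : ℕ} (a : Fin n → Fin k) (m : Fin k) :
    (∑ t : Fin n × Fin n × Fin n,
      if maj3 (a t.1) (a t.2.1) (a t.2.2) = m then (1 : ℝ) else 0) =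
    n * (cnt a m : ℝ) ^ 2 + (cnt a m : ℝ) * ((n : ℝ) ^ 2 - ∑ h, (cnt a h : ℝ) ^ 2) := by
  have hp : ∀ x y z : Fin n, (if maj3 (a x) (a y) (a z) = m then (1 : ℝ) else 0) =
      (if a y = m then 1 else 0) * (if a z = m then 1 else 0) +
      (if a x = m then 1 else 0) * (1 - ∑ h, (if a y = h then 1 else 0) * (if a z = h then 1 else 0)) := by
    intro x y z
    have : (∑ h, (if a y = h then (1 : ℝ) else 0) * (if a z = h then 1 else 0))
        = if a y = a z then 1 else 0 := by
      simp
    rw [this]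
    unfold maj3
    split_ifs <;> simp_all
  have hs : ∀ h, ∑ y, ∑ z, (if a y = h then (1 : ℝ) else 0) * (if a z = h then 1 else 0)
      = (cnt a h : ℝ) ^ 2 := by
    intro h
    rw [cnt_real, sq, Finset.sum_mul_sum]
  have hq : ∑ y, ∑ z, (1 - ∑ h, (if a y = h then (1 : ℝ) else 0) * (if a z = h then 1 else 0))
      = (n : ℝ) ^ 2 - ∑ h, (cnt a h : ℝ) ^ 2 := by
    simp only [Finset.sum_sub_distrib]
    congr 1
    · simp [sq]
    · rw [Finset.sum_congr rfl fun h _ => (hs h).symm]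
      symm
      rw [Finset.sum_comm]
      exact Finset.sum_congr rfl fun y _ => Finset.sum_comm
  have hA : ∀ (u : Fin n → ℝ) (F : Fin n → Fin n → ℝ),
      ∑ x, ∑ y, ∑ z, u x * F y z = (∑ x, u x) * ∑ y, ∑ z, F y z := by
    intro u F
    rw [Finset.sum_mul]
    refine Finset.sum_congr rfl fun x _ => ?_
    simp only [Finset.mul_sum]
  simp only [Fintype.sum_prod_type, hp, Finset.sum_add_distrib, hs]
  rw [hA (fun x => if a x = m then 1 else 0)
    (fun y z => 1 - ∑ h, (if a y = h then (1 : ℝ) else 0) * (if a z = h then 1 else 0)), hq,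
    ← cnt_real]
  simp

/-- Lemma (3maj-max-expected), part (a): for every `m ∈ M(c̄)`,
`μ_m(c̄) = c_m·(1 + γ(c̄) + α(c̄))`. -/
theorem mu_max_eq (n k : ℕ) (hn : 1 ≤ n) (c : Fin k → ℕ) (hc : ∑ h, c h = n)
    (a : Fin n → Fin k) (ha : ∀ h, cnt a h = c h) (m : Fin k) (hm : m ∈ Mset c) :
    stepE a (fun b => (cnt b m : ℝ)) = (c m : ℝ) * (1 + gammaV n c + alphaV n c) := by
  have hmv : mval c = c m := by
    simp only [Mset, Finset.mem_filter] at hm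
    exact hm.2.symm
  have hn0 : (n : ℝ) ≠ 0 := by positivity
  have hcard : (Fintype.card (Sample n) : ℝ) ≠ 0 := by
    simp [Sample, hn0]
  have key : ∀ i : Fin n, ∑ S : Sample n, (if stepA a S i = m then (1 : ℝ) else 0) =
      (Fintype.card (Sample n) : ℝ) *
        (n * (c m : ℝ) ^ 2 + (c m : ℝ) * ((n : ℝ) ^ 2 - ∑ h, (c h : ℝ) ^ 2)) / (n : ℝ) ^ 3 := by
    intro i
    have h := sum_eval_mul i (fun t : Fin n × Fin n × Fin n =>
      if maj3 (a t.1) (a t.2.1) (a t.2.2) = m then (1 : ℝ) else 0)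
    rw [sum_maj] at h
    simp only [ha] at h
    rw [eq_div_iff (by positivity), ← h]
    congr 1
    simp; ring
  unfold stepE
  simp only [cnt_real]
  rw [Finset.sum_comm, Finset.sum_congr rfl fun i _ => key i, Nat.card_eq_fintype_card]
  simp only [Finset.sum_const, Finset.card_univ, Fintype.card_fin, nsmul_eq_mul]
  unfold gammaV
  rw [hmv]
  field_simp
  ring
end

section
/- For every k-cd c̄ for n nodes (n ≥ 1) and every color j ∈ [k] ∖ M(c̄), it holds that μ_j(c̄) = c_j·(1 + γ(c̄) + α(c̄) − (m(c̄) − c_j)/n). -/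
open Finset

lemma sum_coord_aux {ι T : Type*} [Fintype ι] [DecidableEq ι] [Fintype T] (i : ι) (g : T → ℝ) :
    (∑ S : ι → T, g (S i)) * (Fintype.card T : ℝ) = (∑ t, g t) * (Fintype.card (ι → T) : ℝ) := by
  rw [Fintype.card_congr (Equiv.funSplitAt i T), ← (Equiv.funSplitAt i T).symm.sum_comp,
    Fintype.sum_prod_type, Fintype.card_prod]
  simp [Equiv.funSplitAt, Equiv.piSplitAt, ← Finset.mul_sum]
  ring

lemma cnt_cast_aux {n k : ℕ} (a : Fin n → Fin k) (j : Fin k) :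
    (cnt a j : ℝ) = ∑ i, (if a i = j then (1 : ℝ) else 0) := by
  simp [cnt]

lemma ind_aux {k : ℕ} (x y z j : Fin k) :
    (if maj3 x y z = j then (1 : ℝ) else 0) =
      (if y = j then (1 : ℝ) else 0) * (if z = j then (1 : ℝ) else 0) + (if x = j then (1 : ℝ) else 0)
      - (if x = j then (1 : ℝ) else 0) *
        ∑ h, (if y = h then (1 : ℝ) else 0) * (if z = h then (1 : ℝ) else 0) := by
  have : (∑ h, (if y = h then (1 : ℝ) else 0) * (if z = h then (1 : ℝ) else 0))
      = if y = z then 1 else 0 := by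
    simp [eq_comm]
  rw [this]
  unfold maj3
  split_ifs <;> simp_all

lemma triple_aux {n k : ℕ} (a : Fin n → Fin k) (j : Fin k) :
    (∑ t : Fin n × Fin n × Fin n,
      (if maj3 (a t.1) (a t.2.1) (a t.2.2) = j then (1 : ℝ) else 0)) =
      n * (cnt a j : ℝ) ^ 2 + n ^ 2 * (cnt a j : ℝ) - (cnt a j : ℝ) * ∑ h, (cnt a h : ℝ) ^ 2 := by
  have h2 : ∑ y : Fin n, ∑ z : Fin n, ∑ h, (if a y = h then (1 : ℝ) else 0) *
      (if a z = h then (1 : ℝ) else 0) = ∑ h, (cnt a h : ℝ) ^ 2 := by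
    simp_rw [cnt_cast_aux, sq, Finset.sum_mul_sum]
    conv_rhs => rw [Finset.sum_comm]
    refine Finset.sum_congr rfl fun y _ => ?_
    rw [Finset.sum_comm]
  simp_rw [Fintype.sum_prod_type, ind_aux, Finset.sum_sub_distrib, Finset.sum_add_distrib,
    ← Finset.mul_sum, h2, ← Finset.sum_mul, Finset.sum_const,
    ← Finset.smul_sum, ← cnt_cast_aux]
  simp only [Finset.card_univ, Fintype.card_fin, nsmul_eq_mul,
    ← Finset.mul_sum, ← cnt_cast_aux, ← Finset.sum_mul]
  ring

/-- Lemma (3maj-max-expected), part (b): for every `j ∈ [k] ∖ M(c̄)`,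
`μ_j(c̄) = c_j·(1 + γ(c̄) + α(c̄) − (m(c̄) − c_j)/n)`. -/
theorem mu_nonmax_eq (n k : ℕ) (hn : 1 ≤ n) (c : Fin k → ℕ) (hc : ∑ h, c h = n)
    (a : Fin n → Fin k) (ha : ∀ h, cnt a h = c h) (j : Fin k) (hj : j ∉ Mset c) :
    stepE a (fun b => (cnt b j : ℝ)) =
      (c j : ℝ) * (1 + gammaV n c + alphaV n c - ((mval c : ℝ) - (c j : ℝ)) / (n : ℝ)) := by
  have hn0 : (n : ℝ) ≠ 0 := by positivity
  have hN : (Fintype.card (Sample n) : ℝ) ≠ 0 := by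
    have : Nonempty (Fin n) := ⟨⟨0, hn⟩⟩
    exact_mod_cast Fintype.card_ne_zero
  have key : ∀ i : Fin n, ∑ S : Sample n, (if stepA a S i = j then (1 : ℝ) else 0) =
      (n * (c j : ℝ) ^ 2 + n ^ 2 * (c j : ℝ) - (c j : ℝ) * ∑ h, (c h : ℝ) ^ 2)
        * (Fintype.card (Sample n) : ℝ) / n ^ 3 := by
    intro i
    have h : (∑ S : Sample n, (if stepA a S i = j then (1 : ℝ) else 0)) * _ = _ :=
      sum_coord_aux (ι := Fin n) (T := Fin n × Fin n × Fin n) i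
      (fun t => if maj3 (a t.1) (a t.2.1) (a t.2.2) = j then (1 : ℝ) else 0)
    rw [triple_aux] at h
    simp only [ha] at h
    rw [eq_div_iff (by positivity), ← h]
    simp only [Fintype.card_prod, Fintype.card_fin]
    push_cast
    ring
  unfold stepE gammaV
  simp_rw [cnt_cast_aux]
  rw [Finset.sum_comm, Nat.card_eq_fintype_card]
  simp_rw [key]
  rw [Finset.sum_const, Finset.card_univ, Fintype.card_fin, nsmul_eq_mul]
  field_simp
  ring
end

section
/- (Increasing rate of the bias.) Let c̄ be a k-cd for n nodes (n ≥ 1) with M(c̄) = {m} for some m ∈ [k]. Then for every j ∈ [k] ∖ {m}, Pr[ C_{m,t+1} − C_{j,t+1} ≤ s(c̄)·(1 + γ(c̄)) + c_m·α(c̄)/2 | C_t = c̄ ] ≤ exp(−c_m·α(c̄)²/25). -/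
open Finset

lemma gg_fiber {n k : ℕ} (c : Fin k → ℕ) (a : Fin n → Fin k) (ha : ∀ h, cnt a h = c h)
    (f : Fin k → ℝ) : ∑ i, f (a i) = ∑ h, (c h : ℝ) * f h := by
  rw [← Finset.sum_fiberwise Finset.univ a (fun i => f (a i))]
  refine Finset.sum_congr rfl fun h _ => ?_
  rw [Finset.sum_congr rfl (g := fun _ => f h)]
  · rw [Finset.sum_const, nsmul_eq_mul, ← ha h]; rfl
  · intro i hi; rw [(Finset.mem_filter.1 hi).2]

lemma gg_triple {n : ℕ} (X : Fin n → ℝ) (E : Fin n → Fin n → ℝ) :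
    ∑ x, ∑ y, ∑ z, (X x * (1 - E y z) + X y * X z)
      = (∑ x, X x) * ((n : ℝ) ^ 2 - ∑ y, ∑ z, E y z) + n * (∑ x, X x) ^ 2 := by
  have h1 : ∀ x, ∑ y, ∑ z, (X x * (1 - E y z) + X y * X z)
      = X x * ((n : ℝ) ^ 2 - ∑ y, ∑ z, E y z) + (∑ x, X x) ^ 2 := by
    intro x
    have h2 : ∀ y, ∑ z, (X x * (1 - E y z) + X y * X z)
        = X x * (n - ∑ z, E y z) + X y * ∑ z, X z := by
      intro y
      rw [Finset.sum_add_distrib, ← Finset.mul_sum, ← Finset.mul_sum, Finset.sum_sub_distrib]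
      simp
    rw [Finset.sum_congr rfl (fun y _ => h2 y), Finset.sum_add_distrib, ← Finset.mul_sum,
      ← Finset.sum_mul, Finset.sum_sub_distrib]
    simp
    ring
  rw [Finset.sum_congr rfl (fun x _ => h1 x), Finset.sum_add_distrib, ← Finset.sum_mul]
  simp

lemma gg_count {n k : ℕ} (c : Fin k → ℕ) (a : Fin n → Fin k) (ha : ∀ h, cnt a h = c h)
    (h : Fin k) :
    ∑ t : Fin n × Fin n × Fin n, (if maj3 (a t.1) (a t.2.1) (a t.2.2) = h then (1:ℝ) else 0)
      = n * (c h : ℝ) ^ 2 + c h * ((n : ℝ) ^ 2 - ∑ h, (c h : ℝ) ^ 2) := by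
  have e : ∀ x y z : Fin k, (if maj3 x y z = h then (1:ℝ) else 0)
      = (if x = h then 1 else 0) * (1 - if y = z then 1 else 0)
        + (if y = h then 1 else 0) * (if z = h then 1 else 0) := by
    intro x y z
    unfold maj3
    by_cases h1 : y = z
    · subst h1; simp
    · by_cases h2 : y = h
      · subst h2; simp [h1, Ne.symm h1]
      · simp [h1, h2]
  have s1 : ∑ i, (if a i = h then (1:ℝ) else 0) = c h := by
    rw [gg_fiber c a ha (fun x => if x = h then (1:ℝ) else 0)]; simp
  have s2 : ∑ y, ∑ z, (if a y = a z then (1:ℝ) else 0) = ∑ h, (c h : ℝ) ^ 2 := by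
    rw [gg_fiber c a ha (fun u => ∑ z, (if u = a z then (1:ℝ) else 0))]
    refine Finset.sum_congr rfl fun u _ => ?_
    rw [gg_fiber c a ha (fun v => (if u = v then (1:ℝ) else 0))]; simp [sq]
  rw [← s2]
  have g := gg_triple (fun i => if a i = h then (1:ℝ) else 0)
    (fun y z => if a y = a z then (1:ℝ) else 0)
  rw [s1] at g
  simp only [e, Fintype.sum_prod_type]
  rw [g]
  ring

lemma gg_chernoff {n k : ℕ} (hn : 1 ≤ n) (a : Fin n → Fin k) (m j : Fin k) (hj : j ≠ m)
    (T l A B : ℝ) (hl : 0 ≤ l)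
    (hA : ∑ t : Fin n × Fin n × Fin n,
      (if maj3 (a t.1) (a t.2.1) (a t.2.2) = m then (1:ℝ) else 0) = n ^ 2 * A)
    (hB : ∑ t : Fin n × Fin n × Fin n,
      (if maj3 (a t.1) (a t.2.1) (a t.2.2) = j then (1:ℝ) else 0) = n ^ 2 * B) :
    stepPr a (fun b => (cnt b m : ℝ) - (cnt b j : ℝ) ≤ T) ≤
      Real.exp (l * T + A * (Real.exp (-l) - 1) + B * (Real.exp l - 1)) := by
  have hn0 : (0:ℝ) < n := by exact_mod_cast hn
  set w : Fin n × Fin n × Fin n → ℝ := fun t =>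
    1 + (if maj3 (a t.1) (a t.2.1) (a t.2.2) = m then (1:ℝ) else 0) * (Real.exp (-l) - 1)
      + (if maj3 (a t.1) (a t.2.1) (a t.2.2) = j then (1:ℝ) else 0) * (Real.exp l - 1) with hw
  have hwe : ∀ t, w t = Real.exp (-l *
      ((if maj3 (a t.1) (a t.2.1) (a t.2.2) = m then (1:ℝ) else 0) -
       (if maj3 (a t.1) (a t.2.1) (a t.2.2) = j then (1:ℝ) else 0))) := by
    intro t
    simp only [hw]
    by_cases h1 : maj3 (a t.1) (a t.2.1) (a t.2.2) = m
    · simp [h1, Ne.symm hj]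
    · by_cases h2 : maj3 (a t.1) (a t.2.1) (a t.2.2) = j
      · simp [h2, hj]
      · simp [h1, h2]
  have hcnt : ∀ (b : Fin n → Fin k) h, (cnt b h : ℝ) = ∑ i, if b i = h then (1:ℝ) else 0 := by
    intro b h; simp [cnt]
  have hprod : ∀ S : Sample n, Real.exp (-l * ((cnt (stepA a S) m : ℝ) - cnt (stepA a S) j))
      = ∏ i, w (S i) := by
    intro S
    rw [Finset.prod_congr rfl (fun i _ => hwe (S i)), ← Real.exp_sum, ← Finset.mul_sum,
      Finset.sum_sub_distrib, hcnt, hcnt]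
    rfl
  have hsumw : ∑ t, w t = n ^ 3 * (1 + (A * (Real.exp (-l) - 1) + B * (Real.exp l - 1)) / n) := by
    simp only [hw, Finset.sum_add_distrib, ← Finset.sum_mul, hA, hB]
    simp
    field_simp
    ring
  have hwpos : 0 ≤ ∑ t, w t := Finset.sum_nonneg fun t _ => by rw [hwe]; positivity
  have hcard : (Nat.card (Sample n) : ℝ) = ((n:ℝ) ^ 3) ^ n := by
    simp [Sample]; ring
  have hsum : ∑ S : Sample n, ∏ i, w (S i) = (∑ t, w t) ^ n := by
    have := Finset.prod_univ_sum (fun _ : Fin n => (Finset.univ : Finset (Fin n × Fin n × Fin n)))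
      (fun _ t => w t)
    simp at this
    rw [this]
  unfold stepPr
  rw [hcard, div_le_iff₀ (by positivity)]
  classical
  have hle : (Nat.card {S : Sample n // (cnt (stepA a S) m : ℝ) - (cnt (stepA a S) j : ℝ) ≤ T} : ℝ)
      ≤ Real.exp (l * T) * (∑ t, w t) ^ n := by
    rw [Nat.card_eq_fintype_card, Fintype.card_subtype, Finset.card_filter, ← hsum,
      Finset.mul_sum]
    push_cast
    refine Finset.sum_le_sum fun S _ => ?_
    rw [← hprod, ← Real.exp_add]
    split_ifs with h
    · apply Real.one_le_exp
      nlinarith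
    · positivity
  refine hle.trans ?_
  rw [add_assoc, Real.exp_add, mul_assoc]
  refine mul_le_mul_of_nonneg_left ?_ (Real.exp_pos _).le
  set E := A * (Real.exp (-l) - 1) + B * (Real.exp l - 1)
  have h1 : ∑ t, w t ≤ n ^ 3 * Real.exp (E / n) := by
    rw [hsumw]
    refine mul_le_mul_of_nonneg_left ?_ (by positivity)
    linarith [Real.add_one_le_exp (E / n)]
  calc (∑ t, w t) ^ n ≤ (n ^ 3 * Real.exp (E / n)) ^ n := pow_le_pow_left₀ hwpos h1 n
    _ = Real.exp E * ((n:ℝ) ^ 3) ^ n := by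
      rw [mul_pow, ← Real.exp_nat_mul, mul_div_cancel₀ _ hn0.ne', mul_comm]

lemma gg_cosh (l : ℝ) (h0 : 0 ≤ l) (h1 : l ≤ 1 / 20) : Real.cosh l - 1 ≤ 3 / 5 * l ^ 2 := by
  have h := Real.cosh_le_exp_half_sq l
  have h2 : Real.exp (l ^ 2 / 2) ≤ 1 / (1 - l ^ 2 / 2) := by
    have h3 := Real.add_one_le_exp (-(l ^ 2 / 2))
    rw [Real.exp_neg] at h3
    rw [le_div_iff₀ (by nlinarith)]
    have := Real.exp_pos (l ^ 2 / 2)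
    calc _ ≤ Real.exp (l ^ 2 / 2) * (Real.exp (l ^ 2 / 2))⁻¹ :=
          mul_le_mul_of_nonneg_left (by linarith) this.le
      _ = 1 := mul_inv_cancel₀ this.ne'
  have h4 : 1 / (1 - l ^ 2 / 2) ≤ 1 + 3 / 5 * l ^ 2 := by
    have : l ^ 2 ≤ 1 / 400 := by nlinarith
    rw [div_le_iff₀ (by nlinarith)]
    nlinarith [sq_nonneg l]
  linarith

set_option maxHeartbeats 1000000 in
lemma gg_arith (n M J s Q : ℝ) (hn : 0 < n) (hMn : M ≤ n) (hJ : 0 ≤ J) (hs : 0 ≤ s)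
    (hJs : J + s ≤ M) (hQ : M ^ 2 ≤ Q) (hQn : Q ≤ n * M) (α A B T : ℝ)
    (hα : α = (n - M) * s / n ^ 2)
    (hA : A = M * (1 + M / n - Q / n ^ 2)) (hB : B = J * (1 + J / n - Q / n ^ 2))
    (hT : T = s * (1 + ((n * M - Q) / n ^ 2 - α)) + M * α / 2) :
    α / 5 * T + A * (Real.exp (-(α / 5)) - 1) + B * (Real.exp (α / 5) - 1)
      ≤ -(M * α ^ 2 / 25) := by
  obtain ⟨x, rfl⟩ : ∃ x, M = n * x := ⟨M / n, by field_simp⟩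
  obtain ⟨y, rfl⟩ : ∃ x, J = n * x := ⟨J / n, by field_simp⟩
  obtain ⟨u, rfl⟩ : ∃ x, s = n * x := ⟨s / n, by field_simp⟩
  obtain ⟨q, rfl⟩ : ∃ x, Q = n ^ 2 * x := ⟨Q / n ^ 2, by field_simp⟩
  have hx1 : x ≤ 1 := by nlinarith
  have hy : 0 ≤ y := by nlinarith
  have hu : 0 ≤ u := by nlinarith
  have hyu : y + u ≤ x := by nlinarith
  have hn2 : 0 < n ^ 2 := by positivity
  have hq : x ^ 2 ≤ q := by nlinarith
  have hqx : q ≤ x := by nlinarith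
  have hα' : α = (1 - x) * u := by rw [hα]; field_simp
  have hA' : A = n * (x * (1 + x - q)) := by rw [hA]; field_simp
  have hB' : B = n * (y * (1 + y - q)) := by rw [hB]; field_simp
  have hT' : T = n * (u * (1 + x - q - α) + x * α / 2) := by rw [hT]; field_simp; ring
  have hα0 : 0 ≤ α := by rw [hα']; exact mul_nonneg (by linarith) hu
  have hα1 : α ≤ 1 / 4 := by 
    have h0 : (1 - x) * u ≤ (1 - x) * x := mul_le_mul_of_nonneg_left (by linarith) (by linarith)
    rw [hα']; nlinarith [sq_nonneg (x - 1 / 2)]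
  -- mean gap
  have hgap : T + n * (x * α / 2) ≤ A - B := by
    have : (u * (1 + x - q - α) + x * α / 2) + x * α / 2 ≤
        x * (1 + x - q) - y * (1 + y - q) := by
      have h1 : u * (1 + 2 * x - u - q) ≤ x * (1 + x - q) - y * (1 + y - q) := by
        nlinarith [mul_nonneg (sub_nonneg.2 hyu) (by linarith : 0 ≤ 1 - q),
          mul_nonneg (sub_nonneg.2 hyu) (by linarith : 0 ≤ x - u + y)]
      have h2 : u * (1 + x - q - α) + x * α ≤ u * (1 + 2 * x - u - q) := by
        rw [hα']
        nlinarith [mul_nonneg (mul_nonneg hu (by linarith : 0 ≤ x)) (by linarith : 0 ≤ x - u)]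
      linarith
    rw [hT', hA', hB']
    have := mul_le_mul_of_nonneg_left this hn.le
    linarith
  have hT0 : 0 ≤ T := by
    rw [hT']
    have : 0 ≤ u * (1 + x - q - α) := mul_nonneg hu (by linarith)
    have : 0 ≤ x * α := mul_nonneg (by linarith) hα0
    exact mul_nonneg hn.le (by linarith)
  have hxα : 0 ≤ n * (x * α / 2) := by
    have : 0 ≤ x * α := mul_nonneg (by linarith) hα0
    positivity
  have hAB : A + B ≤ 5 / 2 * (n * x) := by
    have h1 : x * (1 + x - q) ≤ 5 / 4 * x := by
      have h0 : 1 + x - q ≤ 5 / 4 := by nlinarith [sq_nonneg (x - 1 / 2)]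
      have := mul_le_mul_of_nonneg_left h0 (by linarith : 0 ≤ x)
      linarith
    have h2 : y * (1 + y - q) ≤ 5 / 4 * x := by
      refine le_trans ?_ h1
      exact mul_le_mul (by linarith) (by linarith) (by linarith) (by linarith)
    rw [hA', hB']
    have h3 := mul_le_mul_of_nonneg_left h1 hn.le
    have h4 := mul_le_mul_of_nonneg_left h2 hn.le
    linarith
  have hAB0 : 0 ≤ A + B := by
    rw [hA', hB']
    have : 0 ≤ x * (1 + x - q) := mul_nonneg (by linarith) (by linarith)
    have : 0 ≤ y * (1 + y - q) := mul_nonneg (by linarith) (by linarith)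
    positivity
  set l := α / 5 with hl
  have hl0 : 0 ≤ l := by positivity
  have hc := gg_cosh l hl0 (by linarith)
  have hsinh : l ≤ Real.sinh l := Real.self_le_sinh_iff.2 hl0
  have e : A * (Real.exp (-l) - 1) + B * (Real.exp l - 1) =
      -(A - B) * Real.sinh l + (A + B) * (Real.cosh l - 1) := by
    rw [Real.sinh_eq, Real.cosh_eq]; ring
  rw [add_assoc, e]
  have f1 : (A - B) * l ≤ (A - B) * Real.sinh l :=
    mul_le_mul_of_nonneg_left hsinh (by linarith)
  have f2 : (A + B) * (Real.cosh l - 1) ≤ 5 / 2 * (n * x) * (3 / 5 * l ^ 2) :=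
    (mul_le_mul_of_nonneg_left hc hAB0).trans (mul_le_mul_of_nonneg_right hAB (by positivity))
  have f3 : (T + n * (x * α / 2)) * l ≤ (A - B) * l := mul_le_mul_of_nonneg_right hgap hl0
  have hαl : α = 5 * l := by rw [hl]; ring
  rw [hαl] at f3 ⊢
  linarith

/-- Lemma (increasing rate of the bias): if `M(c̄) = {m}` then for every `j ≠ m`,
`Pr[C_{m,t+1} − C_{j,t+1} ≤ s(c̄)·(1 + γ(c̄)) + c_m·α(c̄)/2 | C_t = c̄] ≤ exp(−c_m·α(c̄)²/25)`. -/
theorem gap_growth_prob (n k : ℕ) (hn : 1 ≤ n) (c : Fin k → ℕ) (hc : ∑ h, c h = n)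
    (a : Fin n → Fin k) (ha : ∀ h, cnt a h = c h) (m : Fin k) (hM : Mset c = {m})
    (j : Fin k) (hj : j ≠ m) :
    stepPr a (fun b =>
        (cnt b m : ℝ) - (cnt b j : ℝ) ≤
          (sval c : ℝ) * (1 + gammaV n c) + (c m : ℝ) * alphaV n c / 2) ≤
      Real.exp (-((c m : ℝ) * (alphaV n c) ^ 2 / 25)) := by
  have hn0 : (0:ℝ) < n := by exact_mod_cast hn
  have hmv : c m = mval c := by
    have : m ∈ Mset c := by rw [hM]; simp
    exact (Finset.mem_filter.1 this).2
  have hle : ∀ h, c h ≤ c m := fun h => by rw [hmv]; exact Finset.le_sup (Finset.mem_univ h)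
  have hjs : c j + sval c ≤ c m := by
    have h1 : c j ≤ (Finset.univ \ Mset c).sup c := Finset.le_sup (by simp [hM, hj])
    have h2 := hle j
    have h3 : sval c = c m - (Finset.univ \ Mset c).sup c := by simp [sval, hM, hmv]
    omega
  have hmn : c m ≤ n := by rw [← hc]; exact Finset.single_le_sum (fun _ _ => Nat.zero_le _) (Finset.mem_univ m)
  have hQ : (c m : ℝ) ^ 2 ≤ ∑ h, (c h : ℝ) ^ 2 :=
    Finset.single_le_sum (f := fun h => (c h : ℝ) ^ 2) (fun _ _ => sq_nonneg _) (Finset.mem_univ m)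
  have hcR : (∑ h, (c h : ℝ)) = n := by exact_mod_cast hc
  have hQn : ∑ h, (c h : ℝ) ^ 2 ≤ n * c m := by
    rw [← hcR, Finset.sum_mul]
    refine Finset.sum_le_sum fun h _ => ?_
    rw [sq]
    exact mul_le_mul_of_nonneg_left (by exact_mod_cast hle h) (by positivity)
  have key := gg_arith n (c m) (c j) (sval c) (∑ h, (c h : ℝ) ^ 2) hn0 (by exact_mod_cast hmn)
    (by positivity) (by positivity) (by exact_mod_cast hjs) hQ hQn (alphaV n c) _ _
    ((sval c : ℝ) * (1 + gammaV n c) + (c m : ℝ) * alphaV n c / 2)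
    (by rw [alphaV, hmv]) rfl rfl (by rw [gammaV, hmv])
  have hα0 : 0 ≤ alphaV n c := by
    rw [alphaV, ← hmv]
    have : (c m : ℝ) ≤ n := by exact_mod_cast hmn
    exact div_nonneg (mul_nonneg (by linarith) (by positivity)) (by positivity)
  refine (gg_chernoff hn a m j hj _ (alphaV n c / 5) _ _ (by positivity) ?_ ?_).trans
    (Real.exp_le_exp.2 key)
  · rw [gg_count c a ha]; field_simp; ring
  · rw [gg_count c a ha]; field_simp; ring
end

section
/- Let c̄ be a k-cd for n nodes (n ≥ 1) with M(c̄) = {m} for some m ∈ [k]. Then Pr[ C_{m,t+1} ≤ c_m·(1 + γ(c̄) + α(c̄)/2) | C_t = c̄ ] ≤ exp(−c_m·α(c̄)²/11). -/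
open Finset

lemma aux_cnt_sum {n k : ℕ} (a : Fin n → Fin k) (m : Fin k) :
    ∑ x : Fin n, (if a x = m then (1:ℝ) else 0) = cnt a m := by
  simp [cnt]

lemma aux_pair {n k : ℕ} (a : Fin n → Fin k) :
    ∑ y : Fin n, ∑ z : Fin n, (if a y = a z then (1:ℝ) else 0) = ∑ h, (cnt a h : ℝ) ^ 2 := by
  have h1 : ∀ y z : Fin n, (if a y = a z then (1:ℝ) else 0)
      = ∑ h, (if a y = h then (1:ℝ) else 0) * (if a z = h then (1:ℝ) else 0) := by
    intro y z
    simp [eq_comm]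
  simp_rw [h1]
  have h2 : ∀ h : Fin k, (cnt a h : ℝ)^2 = ∑ y : Fin n, ∑ z : Fin n,
      (if a y = h then (1:ℝ) else 0) * (if a z = h then (1:ℝ) else 0) := by
    intro h
    rw [← aux_cnt_sum, sq, Finset.sum_mul_sum]
  simp_rw [h2]
  rw [Finset.sum_comm' (t' := Finset.univ) (s' := fun _ => Finset.univ) (by simp)]
  rw [Finset.sum_comm]
  conv_rhs => rw [Finset.sum_comm]
  refine Finset.sum_congr rfl fun y _ => ?_
  rw [Finset.sum_comm]

lemma aux_G {n k : ℕ} (a : Fin n → Fin k) (m : Fin k) :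
    ∑ t : Fin n × Fin n × Fin n, (if maj3 (a t.1) (a t.2.1) (a t.2.2) = m then (1:ℝ) else 0)
      = n * (cnt a m : ℝ)^2 + cnt a m * ((n:ℝ)^2 - ∑ h, (cnt a h : ℝ) ^ 2) := by
  have h1 : ∀ x y z : Fin n, (if maj3 (a x) (a y) (a z) = m then (1:ℝ) else 0)
      = (if a y = m then (1:ℝ) else 0) * (if a z = m then (1:ℝ) else 0)
        + (if a x = m then (1:ℝ) else 0) * (1 - (if a y = a z then (1:ℝ) else 0)) := by
    intro x y z
    unfold maj3
    by_cases h : a y = a z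
    · simp [h]
    · by_cases h2 : a y = m
      · have : ¬ a z = m := fun h3 => h (h2.trans h3.symm)
        simp [h, this]
      · simp [h, h2]
  simp only [Fintype.sum_prod_type]
  simp_rw [h1, Finset.sum_add_distrib, ← Finset.mul_sum, ← Finset.sum_mul,
    Finset.sum_sub_distrib, aux_pair, aux_cnt_sum]
  simp
  ring

lemma aux_exp {l : ℝ} (hl : 0 ≤ l) : Real.exp (-l) ≤ 1 - l + l^2/2 := by
  rw [Real.exp_neg]
  have h := Real.quadratic_le_exp_of_nonneg hl
  have h0 : 0 < 1 + l + l^2/2 := by positivity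
  refine (inv_anti₀ h0 h).trans ?_
  rw [inv_le_iff_one_le_mul₀ h0]
  nlinarith [sq_nonneg (l^2)]

lemma aux_markov {n k : ℕ} (hn : 1 ≤ n) (a : Fin n → Fin k) (m : Fin k) (T l p : ℝ) (hl : 0 ≤ l)
    (hp : ∑ t : Fin n × Fin n × Fin n,
      (if maj3 (a t.1) (a t.2.1) (a t.2.2) = m then (1:ℝ) else 0) = (n:ℝ)^3 * p) :
    stepPr a (fun b => (cnt b m : ℝ) ≤ T) ≤
      Real.exp (l * T + n * p * (Real.exp (-l) - 1)) := by
  have hn0 : (0:ℝ) < n := by exact_mod_cast hn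
  have hcard : (Nat.card (Sample n) : ℝ) = ((n:ℝ)^3)^n := by
    simp [Sample]; ring
  unfold stepPr
  rw [hcard, div_le_iff₀ (by positivity)]
  have h1 : (Nat.card {S : Sample n // (cnt (stepA a S) m : ℝ) ≤ T} : ℝ)
      ≤ ∑ S : Sample n, Real.exp (l * T - l * cnt (stepA a S) m) := by
    classical
    rw [Nat.card_eq_fintype_card, Fintype.card_subtype, Finset.card_filter]
    push_cast
    refine Finset.sum_le_sum fun S _ => ?_
    split_ifs with h
    · rw [Real.one_le_exp_iff]
      nlinarith
    · positivity
  refine h1.trans ?_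
  have h2 : ∀ S : Sample n, Real.exp (l * T - l * cnt (stepA a S) m) = Real.exp (l*T) *
      ∏ i, Real.exp (-l * (if maj3 (a (S i).1) (a (S i).2.1) (a (S i).2.2) = m
        then (1:ℝ) else 0)) := by
    intro S
    rw [← Real.exp_sum, ← Real.exp_add, ← Finset.mul_sum]
    have hh : ∑ i : Fin n, (if maj3 (a (S i).1) (a (S i).2.1) (a (S i).2.2) = m
        then (1:ℝ) else 0) = cnt (stepA a S) m := aux_cnt_sum (stepA a S) m
    rw [hh]
    ring_nf
  simp_rw [h2, ← Finset.mul_sum]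
  rw [← Fintype.piFinset_univ, ← Finset.prod_univ_sum (fun _ => Finset.univ)
    (fun (_ : Fin n) (t : Fin n × Fin n × Fin n) =>
      Real.exp (-l * (if maj3 (a t.1) (a t.2.1) (a t.2.2) = m then (1:ℝ) else 0)))]
  have h3 : ∀ t : Fin n × Fin n × Fin n,
      Real.exp (-l * (if maj3 (a t.1) (a t.2.1) (a t.2.2) = m then (1:ℝ) else 0))
      = 1 + (if maj3 (a t.1) (a t.2.1) (a t.2.2) = m then (1:ℝ) else 0) * (Real.exp (-l) - 1) := by
    intro t
    split_ifs <;> simp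
  simp_rw [h3, Finset.sum_add_distrib, ← Finset.sum_mul, hp]
  have h4 : (∑ t : Fin n × Fin n × Fin n, (1:ℝ)) = (n:ℝ)^3 := by
    simp; ring
  have h5 : 0 ≤ (n:ℝ)^3 + (n:ℝ)^3 * p * (Real.exp (-l) - 1) := by
    rw [← hp, ← h4, Finset.sum_mul, ← Finset.sum_add_distrib]
    refine Finset.sum_nonneg fun t _ => ?_
    rw [← h3]; positivity
  rw [h4, Finset.prod_const, Finset.card_univ, Fintype.card_fin, Real.exp_add,
    mul_assoc (Real.exp (l * T))]
  refine mul_le_mul_of_nonneg_left ?_ (Real.exp_pos _).le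
  rw [mul_assoc (n:ℝ), Real.exp_nat_mul, ← mul_pow]
  refine pow_le_pow_left₀ h5 ?_ n
  have := Real.add_one_le_exp (p * (Real.exp (-l) - 1))
  have hn3 : (0:ℝ) < (n:ℝ)^3 := by positivity
  nlinarith

/-- Lemma (3maj-max-prob): if `M(c̄) = {m}` then
`Pr[C_{m,t+1} ≤ c_m·(1 + γ(c̄) + α(c̄)/2) | C_t = c̄] ≤ exp(−c_m·α(c̄)²/11)`. -/
theorem max_growth_prob (n k : ℕ) (hn : 1 ≤ n) (c : Fin k → ℕ) (hc : ∑ h, c h = n)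
    (a : Fin n → Fin k) (ha : ∀ h, cnt a h = c h) (m : Fin k) (hM : Mset c = {m}) :
    stepPr a (fun b =>
        (cnt b m : ℝ) ≤ (c m : ℝ) * (1 + gammaV n c + alphaV n c / 2)) ≤
      Real.exp (-((c m : ℝ) * (alphaV n c) ^ 2 / 11)) := by
  have hmm : mval c = c m := by
    have : m ∈ Mset c := by simp [hM]
    simp [Mset] at this
    exact this.symm
  have hn0 : (0:ℝ) < n := by exact_mod_cast hn
  have hle : (c m : ℝ) ≤ n := by
    have : c m ≤ n := hc ▸ Finset.single_le_sum (fun _ _ => Nat.zero_le _) (Finset.mem_univ m)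
    exact_mod_cast this
  have hcm : (0:ℝ) ≤ c m := by positivity
  have hα : 0 ≤ alphaV n c := by
    unfold alphaV
    rw [hmm]
    have : (0:ℝ) ≤ n - c m := by linarith
    positivity
  set α := alphaV n c with hαdef
  set g : ℝ := ((n:ℝ) * c m - ∑ h, (c h : ℝ) ^ 2) / (n : ℝ) ^ 2 with hg
  have hγ : gammaV n c = g - α := by
    unfold gammaV
    rw [hmm]
  have hgle : g ≤ 1/4 := by
    have hs : (c m : ℝ)^2 ≤ ∑ h, (c h : ℝ)^2 :=
      Finset.single_le_sum (f := fun h => (c h : ℝ)^2) (fun _ _ => sq_nonneg _)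
        (Finset.mem_univ m)
    rw [hg, div_le_iff₀ (by positivity)]
    nlinarith [sq_nonneg ((n:ℝ) - 2 * c m)]
  have hG := aux_G a m
  simp_rw [ha] at hG
  have key := aux_markov hn a m ((c m : ℝ) * (1 + gammaV n c + α / 2)) (2 * α / 5)
    (c m * (1 + g) / n) (by positivity) (by
      rw [hG, hg]
      field_simp
      ring)
  refine key.trans (Real.exp_le_exp.mpr ?_)
  have hgl : -1 ≤ g := by
    have hs : ∑ h, (c h : ℝ)^2 ≤ (n:ℝ)^2 := by
      have : (n:ℝ) = ∑ h, (c h : ℝ) := by rw [← hc]; push_cast; rfl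
      rw [this]
      exact Finset.sum_sq_le_sq_sum_of_nonneg (fun _ _ => by positivity)
    rw [hg, le_div_iff₀ (by positivity)]
    nlinarith
  have hmu : (n:ℝ) * (c m * (1 + g) / n) = c m * (1+g) := by field_simp
  rw [hmu, hγ]
  have h1 := mul_le_mul_of_nonneg_left (aux_exp (l := 2 * α / 5) (by positivity))
    (mul_nonneg hcm (by linarith : (0:ℝ) ≤ 1 + g))
  have h2 : 0 ≤ c m * α^2 := by positivity
  have h3 : (c m * α^2) * g ≤ (c m * α^2) * (1/4) := mul_le_mul_of_nonneg_left hgle h2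
  nlinarith
end

section
/- (Very-large majority, second bound.) There exists n₀ such that for all n ≥ n₀ the following holds. Let c̄ be a k-cd for n nodes with s(c̄) ≥ n/3, attained with majority color m ∈ M(c̄). If n − c_m < n^{1/4}·log n, then Pr[ C̄_{m,t+1} > 0 | C_t = c̄ ] ≤ n^{−1/5}, where C̄_{m,t+1} = n − C_{m,t+1}. -/
open Finset

lemma card_coord {ι α : Type*} [Fintype ι] [DecidableEq ι] [Fintype α] [DecidableEq α]
    (B : Finset α) (i : ι) :
    (univ.filter (fun S : ι → α => S i ∈ B)).card * Fintype.card α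
      = B.card * Fintype.card (ι → α) := by
  have h : (univ.filter (fun S : ι → α => S i ∈ B))
      = Fintype.piFinset (Function.update (fun _ => (univ : Finset α)) i B) := by
    ext S
    simp only [mem_filter, mem_univ, true_and, Fintype.mem_piFinset]
    constructor
    · intro h j
      by_cases hj : j = i
      · subst hj; simpa using h
      · simp [Function.update_of_ne hj]
    · intro h; simpa using h i
  rw [h, Fintype.card_piFinset, Fintype.card_fun,
    ← Finset.mul_prod_erase univ _ (mem_univ i)]
  have h2 : ∏ x ∈ univ.erase i, (Function.update (fun _ => (univ : Finset α)) i B x).card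
      = ∏ x ∈ univ.erase i, Fintype.card α := by
    apply Finset.prod_congr rfl
    intro x hx
    rw [Function.update_of_ne (Finset.ne_of_mem_erase hx)]
    rfl
  rw [h2, Function.update_self, mul_assoc, Finset.prod_const, ← pow_succ,
    Finset.card_erase_of_mem (mem_univ i), Finset.card_univ,
    Nat.sub_add_cancel (Fintype.card_pos_iff.mpr ⟨i⟩)]

lemma card_bad {n k : ℕ} (a : Fin n → Fin k) (m : Fin k) (q : ℕ)
    (hq : (univ.filter (fun i => a i ≠ m)).card = q) :
    (univ.filter (fun p : Fin n × Fin n × Fin n =>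
      maj3 (a p.1) (a p.2.1) (a p.2.2) ≠ m)).card ≤ 3 * q ^ 2 * n := by
  set N := univ.filter (fun i => a i ≠ m) with hN
  have hsub : univ.filter (fun p : Fin n × Fin n × Fin n =>
      maj3 (a p.1) (a p.2.1) (a p.2.2) ≠ m) ⊆
      (univ ×ˢ N ×ˢ N) ∪ ((N ×ˢ univ ×ˢ N) ∪ (N ×ˢ N ×ˢ univ)) := by
    rintro ⟨x, y, z⟩ h
    replace h := (mem_filter.mp h).2
    simp only [maj3] at h
    simp only [mem_filter, mem_univ, true_and, mem_union, mem_product, hN, and_true]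
    by_cases hyz : a y = a z
    · simp [hyz] at h ⊢
      simp [h]
    · simp only [hyz, if_false] at h
      by_cases hy : a y = m
      · have : a z ≠ m := fun hz => hyz (hy.trans hz.symm)
        tauto
      · tauto
  refine (card_le_card hsub).trans ((card_union_le _ _).trans
    ((Nat.add_le_add_left (card_union_le _ _) _).trans ?_))
  simp only [card_product, hq, card_univ, Fintype.card_fin]
  apply le_of_eq; ring

lemma stepPr_bound {n k : ℕ} (hn : 0 < n) (a : Fin n → Fin k) (m : Fin k) (q : ℕ)
    (hq : (univ.filter (fun i => a i ≠ m)).card = q) :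
    stepPr a (fun b => (n : ℝ) - (cnt b m : ℝ) > 0) ≤ 3 * (q : ℝ) ^ 2 / n := by
  classical
  set B := univ.filter (fun p : Fin n × Fin n × Fin n =>
      maj3 (a p.1) (a p.2.1) (a p.2.2) ≠ m) with hB
  have hBc : B.card ≤ 3 * q ^ 2 * n := card_bad a m q hq
  have hn3 : Fintype.card (Fin n × Fin n × Fin n) = n ^ 3 := by
    simp; ring
  set A := univ.filter (fun S : Sample n => (n : ℝ) - (cnt (stepA a S) m : ℝ) > 0) with hA
  have hcardA : Nat.card {S : Sample n // (n : ℝ) - (cnt (stepA a S) m : ℝ) > 0} = A.card := by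
    rw [Nat.card_eq_fintype_card, Fintype.card_subtype]
  have hsub : A ⊆ univ.biUnion (fun i : Fin n => univ.filter (fun S : Sample n => S i ∈ B)) := by
    intro S hS
    simp only [hA, mem_filter, mem_univ, true_and] at hS
    by_contra hcon
    simp only [mem_biUnion, mem_univ, mem_filter, true_and, hB, not_exists, not_not] at hcon
    have : cnt (stepA a S) m = n := by
      unfold cnt
      rw [Finset.filter_true_of_mem]
      · simp
      · intro i _; exact hcon i
    rw [this] at hS
    simp at hS
  have h1 : A.card * n ^ 3 ≤ n * (3 * q ^ 2 * n * Fintype.card (Sample n)) := by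
    calc A.card * n ^ 3 ≤ (∑ i : Fin n, (univ.filter (fun S : Sample n => S i ∈ B)).card) * n ^ 3 :=
          Nat.mul_le_mul_right _ ((card_le_card hsub).trans card_biUnion_le)
      _ = ∑ i : Fin n, B.card * Fintype.card (Sample n) := by
          rw [Finset.sum_mul]
          refine Finset.sum_congr rfl fun i _ => ?_
          rw [← hn3]; exact card_coord B i
      _ ≤ n * (3 * q ^ 2 * n * Fintype.card (Sample n)) := by
          simp only [sum_const, card_univ, Fintype.card_fin, smul_eq_mul]
          gcongr
  unfold stepPr
  rw [hcardA, Nat.card_eq_fintype_card]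
  have hpos : 0 < Fintype.card (Sample n) :=
    Fintype.card_pos_iff.mpr ⟨fun _ => (⟨0, hn⟩, ⟨0, hn⟩, ⟨0, hn⟩)⟩
  generalize Fintype.card (Sample n) = T at *
  have h2 : (A.card : ℝ) * (n : ℝ) ^ 3 ≤ n * (3 * q ^ 2 * n * T) := by exact_mod_cast h1
  have hn' : (0 : ℝ) < n := by exact_mod_cast hn
  have hT : (0 : ℝ) < T := by exact_mod_cast hpos
  rw [div_le_div_iff₀ hT hn']
  have h3 : (0 : ℝ) < (n : ℝ) ^ 2 := by positivity
  refine le_of_mul_le_mul_right ?_ h3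
  nlinarith [h2]

/-- Lemma (very-large majority), second bound: for all sufficiently large `n`, if
`s(c̄) ≥ n/3` with majority color `m` and `n − c_m < n^{1/4}·log n`, then
`Pr[C̄_{m,t+1} > 0 | C_t = c̄] ≤ n^{−1/5}`. -/
theorem minority_vanishes : ∃ n₀ : ℕ, ∀ n : ℕ, n₀ ≤ n → ∀ k : ℕ, ∀ c : Fin k → ℕ,
    (∑ h, c h = n) → ∀ a : Fin n → Fin k, (∀ h, cnt a h = c h) →
    ∀ m : Fin k, m ∈ Mset c → (sval c : ℝ) ≥ (n : ℝ) / 3 →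
    ((n : ℝ) - (c m : ℝ) < (n : ℝ) ^ ((1 : ℝ) / 4) * Real.log n) →
    stepPr a (fun b => (n : ℝ) - (cnt b m : ℝ) > 0) ≤ (n : ℝ) ^ (-(1 : ℝ) / 5) := by
  have hlog := (isLittleO_log_rpow_atTop (show (0 : ℝ) < 1 / 20 by norm_num)).def
    (show (0 : ℝ) < 1 / 2 by norm_num)
  have hlog' := tendsto_natCast_atTop_atTop.eventually hlog
  obtain ⟨N, hN⟩ := Filter.eventually_atTop.mp hlog'
  refine ⟨max N 1, fun n hn k c _ a hac m _ _ hlt => ?_⟩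
  have hn1 : 1 ≤ n := le_trans (le_max_right _ _) hn
  have hnR : (1 : ℝ) ≤ n := by exact_mod_cast hn1
  have hn0 : (0 : ℝ) < n := by linarith
  have hl := hN n (le_trans (le_max_left _ _) hn)
  rw [Real.norm_of_nonneg (Real.log_nonneg hnR),
    Real.norm_of_nonneg (Real.rpow_nonneg hn0.le _)] at hl
  set q := (univ.filter (fun i => a i ≠ m)).card with hq
  refine (stepPr_bound hn1 a m q rfl).trans ?_
  have hsum : c m + q = n := by
    rw [← hac m]
    have := Finset.card_filter_add_card_filter_not (s := (univ : Finset (Fin n))) (fun i => a i = m)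
    simpa [cnt, hq] using this
  have hsum' : (c m : ℝ) + q = n := by exact_mod_cast hsum
  have hq1 : (q : ℝ) ≤ 1 / 2 * (n : ℝ) ^ ((3 : ℝ) / 10) := by
    calc (q : ℝ) ≤ (n : ℝ) ^ ((1 : ℝ) / 4) * Real.log n := by linarith
      _ ≤ (n : ℝ) ^ ((1 : ℝ) / 4) * (1 / 2 * (n : ℝ) ^ ((1 : ℝ) / 20)) := by gcongr
      _ = 1 / 2 * ((n : ℝ) ^ ((1 : ℝ) / 4) * (n : ℝ) ^ ((1 : ℝ) / 20)) := by ring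
      _ = 1 / 2 * (n : ℝ) ^ ((3 : ℝ) / 10) := by
          rw [← Real.rpow_add hn0]; norm_num
  rw [div_le_iff₀ hn0]
  calc 3 * (q : ℝ) ^ 2 ≤ 3 * (1 / 2 * (n : ℝ) ^ ((3 : ℝ) / 10)) ^ 2 := by gcongr
    _ = 3 / 4 * ((n : ℝ) ^ ((3 : ℝ) / 10) * (n : ℝ) ^ ((3 : ℝ) / 10)) := by ring
    _ = 3 / 4 * (n : ℝ) ^ ((3 : ℝ) / 5) := by rw [← Real.rpow_add hn0]; norm_num
    _ ≤ 1 * (n : ℝ) ^ ((4 : ℝ) / 5) := by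
        exact mul_le_mul (by norm_num)
          (Real.rpow_le_rpow_of_exponent_le hnR (by norm_num)) (by positivity) (by norm_num)
    _ = (n : ℝ) ^ (-(1 : ℝ) / 5) * n := by
        rw [one_mul]
        nth_rewrite 3 [← Real.rpow_one (n : ℝ)]
        rw [← Real.rpow_add hn0]; norm_num
end

section
/- (Very-large majority, third bound.) There exists n₀ such that for all n ≥ n₀ the following holds. Let c̄ be a k-cd for n nodes with s(c̄) ≥ n/3, attained with majority color m ∈ M(c̄). If n − c_m < n^{1/4}·log n, then Pr[ C̄_{m,t+1} ≥ n^{1/4}·log n | C_t = c̄ ] ≤ 1/n², where C̄_{m,t+1} = n − C_{m,t+1}. -/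
open Finset

open Finset in
/-- Complement of the count. -/
lemma cnt_compl {n k : ℕ} (b : Fin n → Fin k) (m : Fin k) :
    (((univ.filter (fun i => b i ≠ m)).card : ℕ) : ℝ) = (n : ℝ) - (cnt b m : ℝ) := by
  have h := Finset.card_filter_add_card_filter_not (s := (univ : Finset (Fin n))) (fun i => b i = m)
  rw [Finset.card_univ, Fintype.card_fin] at h
  have h2 : (cnt b m : ℝ) + ((univ.filter (fun i => b i ≠ m)).card : ℝ) = n := by
    unfold cnt
    exact_mod_cast h
  linarith

open Finset in
lemma bad_card {n k : ℕ} (a : Fin n → Fin k) (m : Fin k) :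
    (univ.filter (fun x : Fin n × Fin n × Fin n =>
      maj3 (a x.1) (a x.2.1) (a x.2.2) ≠ m)).card
      ≤ 3 * (univ.filter (fun i => a i ≠ m)).card ^ 2 * n := by
  set Q := univ.filter (fun i => a i ≠ m) with hQ
  have hsub : (univ.filter (fun x : Fin n × Fin n × Fin n =>
      maj3 (a x.1) (a x.2.1) (a x.2.2) ≠ m)) ⊆
      (Q ×ˢ (Q ×ˢ (univ : Finset (Fin n)))) ∪ ((Q ×ˢ ((univ : Finset (Fin n)) ×ˢ Q)) ∪
        ((univ : Finset (Fin n)) ×ˢ (Q ×ˢ Q))) := by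
    rintro ⟨x, y, z⟩ h
    simp only [mem_filter, mem_univ, true_and, maj3, mem_union, mem_product, hQ, and_true] at h ⊢
    grind
  refine (card_le_card hsub).trans ((card_union_le _ _).trans ?_)
  refine (Nat.add_le_add_left (card_union_le _ _) _).trans ?_
  simp only [card_product, card_univ, Fintype.card_fin]
  apply le_of_eq; ring

open Finset in
lemma mgf {n k : ℕ} (a : Fin n → Fin k) (m : Fin k) (lam : ℝ) :
    ∑ S : Sample n, lam ^ (univ.filter (fun i => stepA a S i ≠ m)).card =
      (∑ x : Fin n × Fin n × Fin n,
        if maj3 (a x.1) (a x.2.1) (a x.2.2) ≠ m then lam else 1) ^ n := by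
  have := Finset.prod_univ_sum (ι := Fin n) (κ := fun _ => Fin n × Fin n × Fin n)
    (fun _ => univ) (fun _ x => if maj3 (a x.1) (a x.2.1) (a x.2.2) ≠ m then lam else 1)
  rw [Finset.prod_const, card_univ, Fintype.card_fin, Fintype.piFinset_univ] at this
  rw [this]
  refine Finset.sum_congr rfl fun S _ => ?_
  rw [Finset.prod_ite, Finset.prod_const, Finset.prod_const_one, mul_one]
  rfl

open Finset in
lemma tail {n k : ℕ} (hn : 0 < n) (a : Fin n → Fin k) (m : Fin k) (L : ℝ) (hL : 5 ≤ L)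
    (hq : (n : ℝ) - (cnt a m : ℝ) < L) (hLn : 3 * L ^ 2 ≤ n) :
    stepPr a (fun b => (n : ℝ) - (cnt b m : ℝ) ≥ L) ≤ 3 * (3 * L ^ 2 / n) ^ 5 := by
  classical
  have hn' : (0 : ℝ) < n := by exact_mod_cast hn
  have hL2 : 0 < 3 * L ^ 2 := by positivity
  set lam : ℝ := n / (3 * L ^ 2) with hlam
  have hl1 : 1 ≤ lam := by rw [hlam, le_div_iff₀ hL2]; linarith
  have hl0 : 0 < lam := by linarith
  set N : ℝ := (n : ℝ) ^ 3 with hN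
  have hcard : (Nat.card (Sample n) : ℝ) = N ^ n := by
    rw [Nat.card_eq_fintype_card]
    simp [Sample, hN]
    ring
  have hN0 : 0 < N := by positivity
  set Q : ℝ := ((univ.filter (fun i => a i ≠ m)).card : ℝ) with hQ
  have hQL : Q ≤ L := by rw [hQ, cnt_compl]; exact hq.le
  have hQ0 : 0 ≤ Q := by positivity
  have hB : ((univ.filter (fun x : Fin n × Fin n × Fin n =>
      maj3 (a x.1) (a x.2.1) (a x.2.2) ≠ m)).card : ℝ) ≤ 3 * L ^ 2 * n := by
    have h1 : ((univ.filter (fun x : Fin n × Fin n × Fin n =>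
      maj3 (a x.1) (a x.2.1) (a x.2.2) ≠ m)).card : ℝ) ≤ 3 * Q ^ 2 * n := by
      rw [hQ]; exact_mod_cast bad_card a m
    refine h1.trans ?_
    gcongr
  have hsum : (∑ x : Fin n × Fin n × Fin n,
        if maj3 (a x.1) (a x.2.1) (a x.2.2) ≠ m then lam else 1) ≤ N * (1 + 1 / n) := by
    have h1 : (∑ x : Fin n × Fin n × Fin n,
        if maj3 (a x.1) (a x.2.1) (a x.2.2) ≠ m then lam else 1) ≤
        ∑ x : Fin n × Fin n × Fin n,
        (1 + if maj3 (a x.1) (a x.2.1) (a x.2.2) ≠ m then lam else 0) := by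
      apply Finset.sum_le_sum
      intro x _
      split_ifs <;> linarith
    refine h1.trans ?_
    rw [Finset.sum_add_distrib, ← Finset.sum_filter, Finset.sum_const, Finset.sum_const,
      nsmul_eq_mul, nsmul_eq_mul, mul_one]
    have h2 : ((univ : Finset (Fin n × Fin n × Fin n)).card : ℝ) = N := by
      simp [hN]; ring
    rw [h2]
    have h3 := mul_le_mul_of_nonneg_right hB hl0.le
    have h4 : 3 * L ^ 2 * n * lam = N * (1 / n) := by
      rw [hlam, hN]; field_simp
    linarith
  have hmgf : ∑ S : Sample n, lam ^ (univ.filter (fun i => stepA a S i ≠ m)).card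
      ≤ 3 * N ^ n := by
    rw [mgf]
    have h0 : 0 ≤ (∑ x : Fin n × Fin n × Fin n,
        if maj3 (a x.1) (a x.2.1) (a x.2.2) ≠ m then lam else 1) := by
      apply Finset.sum_nonneg; intro x _; split_ifs <;> linarith
    refine (pow_le_pow_left₀ h0 hsum n).trans ?_
    rw [mul_pow, mul_comm]
    gcongr
    have h5 : (1 + 1 / (n : ℝ)) ≤ Real.exp (1 / n) := by
      have := Real.add_one_le_exp (1 / (n : ℝ)); linarith
    refine (pow_le_pow_left₀ (by positivity) h5 n).trans ?_
    rw [← Real.exp_nat_mul, mul_one_div_cancel hn'.ne']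
    have := Real.exp_one_lt_d9; linarith
  have hev : lam ^ 5 * (Nat.card {S : Sample n // (n : ℝ) - (cnt (stepA a S) m : ℝ) ≥ L} : ℝ)
      ≤ ∑ S : Sample n, lam ^ (univ.filter (fun i => stepA a S i ≠ m)).card := by
    rw [Nat.card_eq_fintype_card, Fintype.card_subtype, mul_comm, ← nsmul_eq_mul,
      ← Finset.sum_const]
    refine le_trans ?_ (Finset.sum_le_sum_of_subset_of_nonneg (Finset.subset_univ (univ.filter (fun S : Sample n => (n : ℝ) - (cnt (stepA a S) m : ℝ) ≥ L)))
      (fun S _ _ => by positivity))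
    apply Finset.sum_le_sum
    intro S hS
    apply pow_le_pow_right₀ hl1
    rw [mem_filter, ← cnt_compl] at hS
    have := hL.trans hS.2
    exact_mod_cast this
  unfold stepPr
  rw [hcard, div_le_iff₀ (by positivity)]
  have h6 : 3 * L ^ 2 / n = lam⁻¹ := by rw [hlam, inv_div]
  rw [h6, inv_pow]
  have h7 := hev.trans hmgf
  rw [mul_comm, ← le_div_iff₀ (by positivity)] at h7
  refine h7.trans (le_of_eq ?_)
  field_simp

lemma evt : ∃ n₀ : ℕ, ∀ n : ℕ, n₀ ≤ n → 0 < n ∧ 5 ≤ Real.log n ∧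
    729 * Real.log n ^ 10 ≤ (n : ℝ) ^ ((1 : ℝ) / 2) := by
  have h1 : ∀ᶠ x : ℝ in Filter.atTop, 5 ≤ Real.log x :=
    Real.tendsto_log_atTop.eventually_ge_atTop 5
  have h2 := (isLittleO_log_rpow_rpow_atTop (s := (1 : ℝ) / 2) 10 (by norm_num)).bound
    (show (0 : ℝ) < 1 / 729 by norm_num)
  have h3 : ∀ᶠ x : ℝ in Filter.atTop, 0 < x ∧ 5 ≤ Real.log x ∧
      729 * Real.log x ^ 10 ≤ x ^ ((1 : ℝ) / 2) := by
    filter_upwards [h1, h2, Filter.eventually_gt_atTop 0] with x a b c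
    refine ⟨c, a, ?_⟩
    rw [Real.norm_of_nonneg (by positivity), Real.norm_of_nonneg (by positivity)] at b
    have : Real.log x ^ (10 : ℝ) = Real.log x ^ 10 := by exact_mod_cast Real.rpow_natCast _ 10
    rw [this] at b
    linarith
  obtain ⟨n₀, h⟩ := Filter.eventually_atTop.1 (tendsto_natCast_atTop_atTop.eventually h3)
  exact ⟨n₀, fun n hn => ⟨by exact_mod_cast (h n hn).1, (h n hn).2⟩⟩

/-- Lemma (very-large majority), third bound: for all sufficiently large `n`, if
`s(c̄) ≥ n/3` with majority color `m` and `n − c_m < n^{1/4}·log n`, then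
`Pr[C̄_{m,t+1} ≥ n^{1/4}·log n | C_t = c̄] ≤ 1/n²`. -/
theorem minority_stays_small : ∃ n₀ : ℕ, ∀ n : ℕ, n₀ ≤ n → ∀ k : ℕ, ∀ c : Fin k → ℕ,
    (∑ h, c h = n) → ∀ a : Fin n → Fin k, (∀ h, cnt a h = c h) →
    ∀ m : Fin k, m ∈ Mset c → (sval c : ℝ) ≥ (n : ℝ) / 3 →
    ((n : ℝ) - (c m : ℝ) < (n : ℝ) ^ ((1 : ℝ) / 4) * Real.log n) →
    stepPr a (fun b =>
        (n : ℝ) - (cnt b m : ℝ) ≥ (n : ℝ) ^ ((1 : ℝ) / 4) * Real.log n) ≤ 1 / (n : ℝ) ^ 2 := by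
  obtain ⟨n₀, h₀⟩ := evt
  refine ⟨n₀, fun n hn k c _ a ha m _ _ hq => ?_⟩
  obtain ⟨hn0, hl, hbig⟩ := h₀ n hn
  have hn' : (1 : ℝ) ≤ n := by exact_mod_cast hn0
  rw [← ha m] at hq
  set r : ℝ := (n : ℝ) ^ ((1 : ℝ) / 4) with hr
  set l : ℝ := Real.log n with hldef
  have hr1 : 1 ≤ r := Real.one_le_rpow hn' (by norm_num)
  have hr4 : r ^ 4 = n := by
    rw [hr, ← Real.rpow_natCast, ← Real.rpow_mul (by positivity)]; norm_num
  have hr2 : (n : ℝ) ^ ((1 : ℝ) / 2) = r ^ 2 := by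
    rw [hr, ← Real.rpow_natCast, ← Real.rpow_mul (by positivity)]; norm_num
  rw [hr2] at hbig
  have hl10 : l ^ 2 ≤ l ^ 10 := pow_le_pow_right₀ (by linarith) (by norm_num)
  have hl2 : 0 ≤ l ^ 2 := by positivity
  refine (tail hn0 a m (r * l) (by nlinarith) hq ?_).trans ?_
  · rw [← hr4]
    have : 3 * l ^ 2 ≤ r ^ 2 := by linarith
    nlinarith [sq_nonneg r]
  · rw [← hr4]
    have e : 3 * (3 * (r * l) ^ 2 / r ^ 4) ^ 5 = (729 * l ^ 10) / r ^ 10 := by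
      field_simp; ring
    rw [e, div_le_div_iff₀ (by positivity) (by positivity)]
    calc 729 * l ^ 10 * (r ^ 4) ^ 2 ≤ r ^ 2 * (r ^ 4) ^ 2 := by gcongr
      _ = 1 * r ^ 10 := by ring
end
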